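/- Let A be an integrally closed residuated lattice and write ~a := a\e (= e/a). Then ~~(a·(~a)) = e for all a ∈ A; that is, in the image of the nucleus α(a) = ~~a (with product a ∗ b := ~~(a·b)), every element α(a) is invertible with inverse ~a, so the image is a lattice-ordered group. -/

import Mathlib

/-- A residuated lattice: a lattice-ordered monoid with left and right residuals,
i.e. `b ≤ a\c ↔ a*b ≤ c ↔ a ≤ c/b`.  `ldiv a c` denotes `a\c` and `rdiv c b` denotes `c/b`. -/
class ResiduatedLattice (α : Type*) extends Lattice α, Monoid α where
  ldiv : α → α → α
  rdiv : α → α → α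
  le_ldiv_iff : ∀ a b c : α, b ≤ ldiv a c ↔ a * b ≤ c
  le_rdiv_iff : ∀ a b c : α, a ≤ rdiv c b ↔ a * b ≤ c

open ResiduatedLattice

/-!
If `a * b ≤ 1` in an integrally closed ordered monoid, then `a * b * a ≤ a` and so `b * a ≤ 1`:
an inequality with upper bound `1` may be rotated cyclically. If `a * ~a * c ≤ 1`, then
`~a * c ≤ ~a` by adjunction, and `c ≤ 1`. As also `a * ~a ≤ 1`, the greatest such `c` is `1`, that
is, `~(a * ~a) = 1`. Likewise `~a * a * c ≤ 1` rotates to `a * c * ~a ≤ 1`, so `c * ~a ≤ ~a`;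
multiplying by `~~a` on the left and rotating turns this into `~~a * c ≤ ~~a`, and again `c ≤ 1`.
-/

/-- The order-theoretic form of the identity `a \ a = 1` defining integrally closed residuated
lattices, stated without residuals. Only the left-handed condition is imposed: its mirror image
`IntegrallyClosed.le_one_of_mul_le_right` follows once `1` has residuals. -/
def IntegrallyClosed (M : Type*) [MulOneClass M] [LE M] : Prop :=
  ∀ ⦃a b : M⦄, a * b ≤ a → b ≤ 1

/-- The operation `~a = a \ 1` of a residuated lattice, characterized by its adjunction so that it
makes sense in ordered monoids where no other residuals need exist. -/
def IsNegation {M : Type*} [MulOneClass M] [LE M] (neg : M → M) : Prop :=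
  ∀ a b : M, b ≤ neg a ↔ a * b ≤ 1

namespace IsNegation

theorem mul_neg_le_one {M : Type*} [MulOneClass M] [Preorder M] {neg : M → M}
    (hneg : IsNegation neg) (a : M) : a * neg a ≤ 1 :=
  (hneg a _).1 le_rfl

variable {M : Type*} [MulOneClass M] [PartialOrder M] {neg : M → M}

theorem neg_eq_one (hneg : IsNegation neg) {a : M} (ha : a ≤ 1)
    (h : ∀ c, a * c ≤ 1 → c ≤ 1) : neg a = 1 :=
  le_antisymm (h _ (hneg.mul_neg_le_one a)) ((hneg a 1).2 ((mul_one a).trans_le ha))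

theorem neg_one_eq_one (hneg : IsNegation neg) : neg 1 = 1 :=
  hneg.neg_eq_one le_rfl fun c hc => (one_mul c).symm.trans_le hc

end IsNegation

section OrderedMonoid

variable {M : Type*} [Monoid M]

namespace IntegrallyClosed

variable [Preorder M] [MulRightMono M] {a b c : M}

theorem mul_le_one_symm (hM : IntegrallyClosed M) (h : a * b ≤ 1) : b * a ≤ 1 :=
  hM <| calc
    a * (b * a) = a * b * a := (mul_assoc a b a).symm
    _ ≤ a := mul_le_of_le_one_left' h

theorem le_one_of_mul_le_right [MulLeftMono M] (hM : IntegrallyClosed M) {neg : M → M}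
    (hneg : IsNegation neg) (h : c * b ≤ b) : c ≤ 1 := by
  have neg_mul_le_one : neg b * b ≤ 1 := hM.mul_le_one_symm (hneg.mul_neg_le_one b)
  have mul_mul_le_one : neg b * c * b ≤ 1 := calc
    neg b * c * b = neg b * (c * b) := mul_assoc _ _ _
    _ ≤ neg b * b := mul_le_mul_right h (neg b)
    _ ≤ 1 := neg_mul_le_one
  exact hM ((hneg b _).2 (hM.mul_le_one_symm mul_mul_le_one))

end IntegrallyClosed

namespace IsNegation

variable [PartialOrder M] {neg : M → M}

theorem neg_mul_neg_self (hneg : IsNegation neg) (hM : IntegrallyClosed M) (a : M) :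
    neg (a * neg a) = 1 := by
  refine hneg.neg_eq_one (hneg.mul_neg_le_one a) fun c hc => ?_
  rw [mul_assoc] at hc
  exact hM ((hneg a _).2 hc)

theorem neg_neg_self_mul [MulLeftMono M] [MulRightMono M] (hneg : IsNegation neg)
    (hM : IntegrallyClosed M) (a : M) : neg (neg a * a) = 1 := by
  refine hneg.neg_eq_one (hM.mul_le_one_symm (hneg.mul_neg_le_one a)) fun c hc => ?_
  rw [mul_assoc] at hc
  have rotated : a * (c * neg a) ≤ 1 := mul_assoc a c (neg a) ▸ hM.mul_le_one_symm hc
  exact hM.le_one_of_mul_le_right hneg ((hneg a _).2 rotated)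

end IsNegation

theorem notnot_mul_not_eq_one_general [PartialOrder M] [MulLeftMono M] [MulRightMono M]
    (hM : IntegrallyClosed M) {neg : M → M} (hneg : IsNegation neg) (a : M) :
    neg (neg (a * neg a)) = 1 ∧
      neg (neg (neg (neg a) * neg a)) = 1 ∧
      neg (neg (neg a * neg (neg a))) = 1 := by
  rw [hneg.neg_mul_neg_self hM, hneg.neg_neg_self_mul hM, hneg.neg_mul_neg_self hM]
  exact ⟨hneg.neg_one_eq_one, hneg.neg_one_eq_one, hneg.neg_one_eq_one⟩

end OrderedMonoid

namespace ResiduatedLattice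

variable {α : Type*} [ResiduatedLattice α]

instance : MulLeftMono α where
  elim a b c h := (le_ldiv_iff a b _).1 (h.trans ((le_ldiv_iff a c _).2 le_rfl))

instance : MulRightMono α where
  elim a b c h := (le_rdiv_iff b a _).1 (h.trans ((le_rdiv_iff c a _).2 le_rfl))

theorem isNegation_ldiv_one : IsNegation fun a : α => ldiv a 1 :=
  fun a b => le_ldiv_iff a b 1

theorem integrallyClosed_of_ldiv_self (h : ∀ a : α, ldiv a a = 1) : IntegrallyClosed α :=
  fun a b hab => h a ▸ (le_ldiv_iff a b a).2 hab

end ResiduatedLattice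

/-- In any integrally closed residuated lattice, `~~(a·(~a)) = e` for all `a`;
in the image of the nucleus `α(a) = ~~a`, with product `a ∗ b := ~~(a·b)`,
every element `α(a)` is invertible with inverse `~a` (so the image is an ℓ-group).
Here `~a := a\e = e/a`. -/
theorem notnot_mul_not_eq_one {α : Type*} [ResiduatedLattice α]
    (hic : ∀ a : α, ldiv a a = 1 ∧ rdiv a a = 1) :
    ∀ a : α, ldiv (ldiv (a * ldiv a 1) 1) 1 = 1 ∧
      ldiv (ldiv (ldiv (ldiv a 1) 1 * ldiv a 1) 1) 1 = 1 ∧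
      ldiv (ldiv (ldiv a 1 * ldiv (ldiv a 1) 1) 1) 1 = 1 :=
  notnot_mul_not_eq_one_general (integrallyClosed_of_ldiv_self fun a => (hic a).1)
    isNegation_ldiv_one
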